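/- arXiv:patt-sol/9311003 — 2 statements merged into one kernel-verified Lean document; each statement's English description precedes it below -/
import Mathlib

section
/- For every Schwartz function φ : ℝ → ℂ, the limit as τ → 0+ of ∫_{ℝ} (1/p) e^{iτ/p} φ(p) dp equals p.v.∫_{ℝ} φ(p)/p dp + iπ φ(0), and the limit as τ → 0− equals p.v.∫_{ℝ} φ(p)/p dp − iπ φ(0). In other words, (1/p) e^{iτ/p} converges in the space of tempered distributions to 1/(p ∓ i0) as τ → ±0. -/
open MeasureTheory Filter Topology

/-- The sine integral. -/
noncomputable def sineInt (x : ℝ) : ℝ := ∫ u in (0:ℝ)..x, Real.sinc u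

lemma sineInt_hasDerivAt (x : ℝ) : HasDerivAt sineInt (Real.sinc x) x := by
  have h := Real.continuous_sinc
  exact intervalIntegral.integral_hasDerivAt_right (h.intervalIntegrable _ _)
    (h.stronglyMeasurableAtFilter _ _) h.continuousAt

lemma sineInt_zero : sineInt 0 = 0 := by simp [sineInt]

lemma sineInt_neg (x : ℝ) : sineInt (-x) = - sineInt x := by
  have := intervalIntegral.integral_comp_neg (a := 0) (b := x) (fun u => Real.sinc u)
  simp only [Real.sinc_neg, neg_zero] at this
  rw [sineInt, sineInt, this, intervalIntegral.integral_symm]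

lemma exp_integrable (x : ℝ) (hx : 0 < x) :
    IntegrableOn (fun t : ℝ => Real.exp (-(x * t))) (Set.Ioi 0) := by
  have := integrableOn_exp_mul_Ioi (a := -x) (by linarith) 0
  simpa using this

lemma exp_int (x : ℝ) (hx : 0 < x) :
    ∫ t in Set.Ioi (0:ℝ), Real.exp (-(x * t)) = 1 / x := by
  have := integral_exp_mul_Ioi (a := -x) (by linarith) 0
  simpa using this

lemma sin_exp_int (R t : ℝ) : ∫ x in (0:ℝ)..R, Real.sin x * Real.exp (-(x * t)) =
    (1 - Real.exp (-(R * t)) * (Real.cos R + t * Real.sin R)) * (1 + t ^ 2)⁻¹ := by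
  have hp : (1 + t ^ 2) ≠ 0 := by positivity
  have hd : ∀ x ∈ Set.uIcc (0:ℝ) R, HasDerivAt
      (fun x => - Real.exp (-(x * t)) * (Real.cos x + t * Real.sin x) * (1 + t ^ 2)⁻¹)
      (Real.sin x * Real.exp (-(x * t))) x := by
    intro x _
    have h1 : HasDerivAt (fun x : ℝ => -(x * t)) (-(1 * t)) x :=
      ((hasDerivAt_id x).mul_const t).neg
    have h2 := ((h1.exp.neg).mul ((Real.hasDerivAt_cos x).add
      ((Real.hasDerivAt_sin x).const_mul t))).mul_const (1 + t ^ 2)⁻¹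
    refine h2.congr_deriv ?_
    simp only [Pi.add_apply, Pi.neg_apply]
    field_simp
    ring
  rw [intervalIntegral.integral_eq_sub_of_hasDerivAt hd
    (Continuous.intervalIntegrable (by fun_prop) _ _)]
  simp
  ring

lemma sineInt_eq (R : ℝ) (hR : 0 < R) : sineInt R = ∫ t in Set.Ioi (0:ℝ),
    (1 - Real.exp (-(R * t)) * (Real.cos R + t * Real.sin R)) * (1 + t ^ 2)⁻¹ := by
  have hint : Integrable (Function.uncurry fun x t : ℝ => Real.sin x * Real.exp (-(x * t)))
      ((volume.restrict (Set.Ioc 0 R)).prod (volume.restrict (Set.Ioi 0))) := by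
    rw [integrable_prod_iff (by
      apply Continuous.aestronglyMeasurable
      unfold Function.uncurry
      fun_prop)]
    constructor
    · filter_upwards [ae_restrict_mem measurableSet_Ioc] with x hx
      exact (exp_integrable x hx.1).const_mul (Real.sin x)
    · have : IntegrableOn (fun x : ℝ => |Real.sinc x|) (Set.Ioc 0 R) :=
        (Real.continuous_sinc.abs.integrableOn_Icc (a := 0) (b := R)).mono_set
          Set.Ioc_subset_Icc_self
      refine this.congr ?_
      filter_upwards [ae_restrict_mem measurableSet_Ioc] with x hx
      simp only [Function.uncurry, norm_mul, Real.norm_eq_abs, Real.abs_exp]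
      rw [integral_const_mul, exp_int x hx.1, Real.sinc_of_ne_zero hx.1.ne', abs_div,
        abs_of_pos hx.1]
      ring
  have hsw := integral_integral_swap hint
  rw [sineInt, intervalIntegral.integral_of_le hR.le]
  calc _ = ∫ x in Set.Ioc 0 R, ∫ t in Set.Ioi (0:ℝ), Real.sin x * Real.exp (-(x * t)) := by
        refine setIntegral_congr_fun measurableSet_Ioc fun x hx => ?_
        rw [integral_const_mul, exp_int x hx.1, Real.sinc_of_ne_zero hx.1.ne']
        ring
    _ = _ := hsw
    _ = _ := by
        refine setIntegral_congr_fun measurableSet_Ioi fun t ht => ?_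
        rw [← intervalIntegral.integral_of_le hR.le, sin_exp_int]

lemma sineInt_tendsto : Tendsto sineInt atTop (𝓝 (Real.pi / 2)) := by
  have hE : ∫ t in Set.Ioi (0:ℝ), (1 + t ^ 2)⁻¹ = Real.pi / 2 := by
    rw [integral_Ioi_inv_one_add_sq]; simp
  rw [← hE]
  have hev : (fun R => ∫ t in Set.Ioi (0:ℝ),
      (1 - Real.exp (-(R * t)) * (Real.cos R + t * Real.sin R)) * (1 + t ^ 2)⁻¹)
      =ᶠ[atTop] sineInt := by
    filter_upwards [eventually_gt_atTop 0] with R hR using (sineInt_eq R hR).symm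
  refine Tendsto.congr' hev ?_
  have key : ∀ R t : ℝ, 0 < t →
      |Real.exp (-(R * t)) * (Real.cos R + t * Real.sin R)| ≤ Real.exp (-(R * t)) * (1 + t) := by
    intro R t ht
    rw [abs_mul, Real.abs_exp]
    gcongr
    calc _ ≤ |Real.cos R| + |t * Real.sin R| := abs_add_le _ _
      _ ≤ 1 + t := by
        rw [abs_mul, abs_of_pos ht]
        have := Real.abs_cos_le_one R
        have := Real.abs_sin_le_one R
        nlinarith
  refine tendsto_integral_filter_of_dominated_convergence
    (fun t => 2 * (1 + t ^ 2)⁻¹) ?_ ?_ ?_ ?_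
  · refine Eventually.of_forall fun R => ?_
    apply Measurable.aestronglyMeasurable
    fun_prop
  · filter_upwards [eventually_ge_atTop 1] with R hR
    filter_upwards [ae_restrict_mem measurableSet_Ioi] with t ht
    have ht : 0 < t := ht
    rw [norm_mul, Real.norm_eq_abs, Real.norm_eq_abs, abs_of_pos (a := (1 + t ^ 2)⁻¹) (by positivity)]
    gcongr
    have h1 := key R t ht
    have h2 : Real.exp (-(R * t)) * (1 + t) ≤ 1 := by
      have h3 : 1 + t ≤ Real.exp (R * t) := by
        have := Real.add_one_le_exp (R * t)
        nlinarith
      rw [Real.exp_neg]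
      rw [inv_mul_le_one₀ (Real.exp_pos _)]
      exact h3
    have := abs_le.1 (h1.trans h2)
    rw [abs_le]; constructor <;> linarith
  · exact (integrable_inv_one_add_sq.integrableOn).const_mul 2
  · filter_upwards [ae_restrict_mem measurableSet_Ioi] with t ht
    have ht : 0 < t := ht
    have h0 : Tendsto (fun R => Real.exp (-(R * t)) * (Real.cos R + t * Real.sin R)) atTop (𝓝 0) := by
      apply squeeze_zero_norm (fun R => key R t ht)
      have : Tendsto (fun R => Real.exp (-(R * t))) atTop (𝓝 0) :=
        Real.tendsto_exp_neg_atTop_nhds_zero.comp (tendsto_id.atTop_mul_const ht)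
      simpa using this.mul_const (1 + t)
    simpa using (h0.const_sub 1).mul_const (1 + t ^ 2)⁻¹

lemma annulus_int (τ ε : ℝ) (h0 : 0 < ε) (h1 : ε < 1) :
    (IntegrableOn (fun p : ℝ => Complex.exp (Complex.I * τ / p) / p)
      (Set.Ioc (-1) (-ε) ∪ Set.Ioc ε 1)) ∧
    ∫ p in (Set.Ioc (-1) (-ε) ∪ Set.Ioc ε 1), Complex.exp (Complex.I * τ / p) / p =
      2 * Complex.I * ((sineInt (τ / ε) - sineInt τ : ℝ) : ℂ) := by
  set f : ℝ → ℂ := fun p : ℝ => Complex.exp (Complex.I * τ / p) / p with hf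
  have hc : ∀ p : ℝ, p ≠ 0 → ContinuousAt f p := by
    intro p hp
    have : (p : ℂ) ≠ 0 := by exact_mod_cast hp
    simp only [hf]
    fun_prop (disch := assumption)
  have hi1 : IntervalIntegrable f volume (-1) (-ε) := by
    apply ContinuousOn.intervalIntegrable
    intro p hp
    rw [Set.uIcc_of_le (by linarith)] at hp
    exact (hc p (by linarith [hp.2] |> ne_of_lt)).continuousWithinAt
  have hi2 : IntervalIntegrable f volume ε 1 := by
    apply ContinuousOn.intervalIntegrable
    intro p hp
    rw [Set.uIcc_of_le (by linarith)] at hp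
    exact (hc p (by linarith [hp.1] |> ne_of_gt)).continuousWithinAt
  have hi3 : IntervalIntegrable (fun p => f (-p)) volume ε 1 := by
    apply ContinuousOn.intervalIntegrable
    intro p hp
    rw [Set.uIcc_of_le (by linarith)] at hp
    have : -p ≠ 0 := by linarith [hp.1] |> ne_of_lt
    exact ((hc (-p) this).comp (f := fun p : ℝ => -p) (by fun_prop)).continuousWithinAt
  have j1 := (intervalIntegrable_iff_integrableOn_Ioc_of_le (by linarith)).1 hi1
  have j2 := (intervalIntegrable_iff_integrableOn_Ioc_of_le (by linarith)).1 hi2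
  refine ⟨j1.union j2, ?_⟩
  rw [setIntegral_union (by
    rw [Set.disjoint_left]
    intro x hx hx'
    linarith [hx.2, hx'.1]) measurableSet_Ioc j1 j2,
    ← intervalIntegral.integral_of_le (by linarith), ← intervalIntegral.integral_of_le (by linarith),
    ← intervalIntegral.integral_comp_neg, ← intervalIntegral.integral_add hi3 hi2]
  have hd : ∀ p ∈ Set.uIcc ε 1, HasDerivAt
      (fun p : ℝ => 2 * Complex.I * ((-sineInt (τ / p) : ℝ) : ℂ)) (f (-p) + f p) p := by
    intro p hp
    rw [Set.uIcc_of_le (by linarith)] at hp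
    have hp0 : p ≠ 0 := by linarith [hp.1] |> ne_of_gt
    have hpc : (p : ℂ) ≠ 0 := by exact_mod_cast hp0
    have e1 : HasDerivAt (fun p : ℝ => τ / p) (τ * (-(p ^ 2)⁻¹)) p := by
      simpa [div_eq_mul_inv] using (hasDerivAt_inv hp0).const_mul τ
    have e2 := (((sineInt_hasDerivAt (τ / p)).comp p e1).neg.ofReal_comp).const_mul (2 * Complex.I)
    refine e2.congr_deriv ?_
    have e3 : -(Real.sinc (τ / p) * (τ * (-(p ^ 2)⁻¹))) = Real.sin (τ / p) / p := by
      by_cases hτ : τ = 0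
      · simp [hτ]
      · rw [Real.sinc_of_ne_zero (by positivity)]
        field_simp
    rw [e3]
    simp only [hf]
    have e4 : Complex.I * τ / p = ((τ / p : ℝ) : ℂ) * Complex.I := by push_cast; ring
    have e5 : Complex.I * τ / ((-p : ℝ) : ℂ) = -((τ / p : ℝ) : ℂ) * Complex.I := by
      push_cast; rw [div_neg]; ring
    rw [e4, e5, Complex.ofReal_div, Complex.ofReal_sin, Complex.sin]
    generalize Complex.exp (-((τ / p : ℝ) : ℂ) * Complex.I) = a
    generalize Complex.exp (((τ / p : ℝ) : ℂ) * Complex.I) = b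
    push_cast
    field_simp
    ring_nf
    simp
  rw [intervalIntegral.integral_eq_sub_of_hasDerivAt hd (hi3.add hi2)]
  push_cast
  simp
  ring

lemma schwartz_lip (φ : SchwartzMap ℝ ℂ) : ∃ C : ℝ, 0 ≤ C ∧ ∀ p : ℝ, ‖φ p - φ 0‖ ≤ C * |p| := by
  obtain ⟨C, hC, h⟩ := (SchwartzMap.derivCLM ℂ ℂ φ).decay 0 0
  refine ⟨C, hC.le, fun p => ?_⟩
  have := Convex.norm_image_sub_le_of_norm_deriv_le (𝕜 := ℝ) (f := φ) (s := Set.univ) (C := C)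
    (x := 0) (y := p)
    (fun x _ => φ.differentiableAt) (fun x _ => by simpa using h x) convex_univ trivial trivial
  simpa using this

/-- The regularised quotient. -/
noncomputable def regQ (φ : SchwartzMap ℝ ℂ) (p : ℝ) : ℂ :=
  (φ p - Set.indicator (Set.Ioc (-1) 1) (fun _ => φ 0) p) / p

lemma regQ_integrable (φ : SchwartzMap ℝ ℂ) : Integrable (regQ φ) := by
  obtain ⟨C, hC, h⟩ := schwartz_lip φ
  have hb : Integrable (fun p : ℝ => ‖φ p‖ + Set.indicator (Set.Ioc (-1) 1) (fun _ => C) p) := by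
    refine φ.integrable.norm.add ?_
    rw [integrable_indicator_iff measurableSet_Ioc]
    exact integrableOn_const (by simp)
  refine hb.mono' ?_ (Eventually.of_forall fun p => ?_)
  · apply Measurable.aestronglyMeasurable
    unfold regQ
    have h1 : Measurable φ := φ.continuous.measurable
    have h2 : Measurable (Set.indicator (Set.Ioc (-1:ℝ) 1) (fun _ => φ 0)) :=
      measurable_const.indicator measurableSet_Ioc
    fun_prop
  · unfold regQ
    rw [norm_div, Complex.norm_real, Real.norm_eq_abs]
    by_cases hp : p ∈ Set.Ioc (-1:ℝ) 1
    · simp only [Set.indicator_of_mem hp]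
      have : ‖φ p - φ 0‖ / |p| ≤ C := div_le_of_le_mul₀ (abs_nonneg _) hC (h p)
      linarith [norm_nonneg (φ p)]
    · simp only [Set.indicator_of_notMem hp, sub_zero, add_zero]
      apply div_le_self (norm_nonneg _)
      by_contra hlt
      push Not at hlt
      have := abs_lt.1 hlt
      exact hp ⟨this.1, this.2.le⟩

lemma norm_osc (τ p : ℝ) : ‖Complex.exp (Complex.I * τ / p)‖ = 1 := by
  have e4 : Complex.I * τ / p = ((τ / p : ℝ) : ℂ) * Complex.I := by push_cast; ring
  rw [e4, Complex.norm_exp_ofReal_mul_I]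

lemma osc_integrable (φ : SchwartzMap ℝ ℂ) (τ : ℝ) :
    Integrable (fun p : ℝ => Complex.exp (Complex.I * τ / p) * regQ φ p) := by
  refine (regQ_integrable φ).bdd_mul (c := 1) ?_ ?_
  · apply Measurable.aestronglyMeasurable
    fun_prop
  · exact Eventually.of_forall fun p => (norm_osc τ p).le

/-- The regular part. -/
noncomputable def regPart (φ : SchwartzMap ℝ ℂ) (τ : ℝ) : ℂ :=
  ∫ p : ℝ, Complex.exp (Complex.I * τ / p) * regQ φ p

lemma regPart_continuous (φ : SchwartzMap ℝ ℂ) : Continuous (regPart φ) := by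
  refine continuous_of_dominated (bound := fun p => ‖regQ φ p‖) ?_ ?_ ?_ ?_
  · exact fun τ => (osc_integrable φ τ).aestronglyMeasurable
  · intro τ
    refine Eventually.of_forall fun p => ?_
    rw [norm_mul, norm_osc, one_mul]
  · exact (regQ_integrable φ).norm
  · refine Eventually.of_forall fun p => ?_
    fun_prop

lemma measurableSet_outer (ε : ℝ) : MeasurableSet {p : ℝ | ε ≤ |p|} :=
  measurableSet_le measurable_const measurable_abs

lemma outer_eq (φ : SchwartzMap ℝ ℂ) (τ ε : ℝ) (h0 : 0 < ε) (h1 : ε < 1) :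
    ∫ p in {p : ℝ | ε ≤ |p|}, Complex.exp (Complex.I * τ / p) * φ p / p =
    (∫ p in {p : ℝ | ε ≤ |p|}, Complex.exp (Complex.I * τ / p) * regQ φ p) +
      φ 0 * (2 * Complex.I * ((sineInt (τ / ε) - sineInt τ : ℝ) : ℂ)) := by
  obtain ⟨hi, he⟩ := annulus_int τ ε h0 h1
  set A := Set.Ioc (-1:ℝ) (-ε) ∪ Set.Ioc ε 1 with hA
  have hAm : MeasurableSet A := measurableSet_Ioc.union measurableSet_Ioc
  have hE := measurableSet_outer ε
  rw [← he, ← integral_const_mul, ← integral_indicator hE, ← integral_indicator hE,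
    ← integral_indicator hAm, ← integral_add ((osc_integrable φ τ).indicator hE)
      ((integrable_indicator_iff hAm).2 (hi.const_mul (φ 0)))]
  have hne : ∀ᵐ p : ℝ, p ≠ ε := by simp [ae_iff]
  have hne' : ∀ᵐ p : ℝ, p ≠ -1 := by simp [ae_iff]
  refine integral_congr_ae ?_
  filter_upwards [hne, hne'] with p hp hp'
  by_cases hpE : p ∈ {p : ℝ | ε ≤ |p|}
  · rw [Set.indicator_of_mem hpE, Set.indicator_of_mem hpE]
    unfold regQ
    by_cases hpI : p ∈ Set.Ioc (-1:ℝ) 1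
    · have hpA : p ∈ A := by
        rcases le_abs.1 (show ε ≤ |p| from hpE) with h | h
        · exact Or.inr ⟨lt_of_le_of_ne h (Ne.symm hp), hpI.2⟩
        · exact Or.inl ⟨hpI.1, by linarith⟩
      rw [Set.indicator_of_mem hpI, Set.indicator_of_mem hpA]
      ring
    · have hpA : p ∉ A := by
        rintro (h | h)
        · exact hpI ⟨h.1, by linarith [h.2]⟩
        · exact hpI ⟨by linarith [h.1], h.2⟩
      rw [Set.indicator_of_notMem hpI, Set.indicator_of_notMem hpA]
      ring
  · have hpA : p ∉ A := by
      rintro (h | h)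
      · exact hpE (show ε ≤ |p| from le_abs.2 (Or.inr (by linarith [h.2])))
      · exact hpE (show ε ≤ |p| from le_abs.2 (Or.inl h.1.le))
    rw [Set.indicator_of_notMem hpE, Set.indicator_of_notMem hpE, Set.indicator_of_notMem hpA,
      add_zero]

lemma reg_tendsto (φ : SchwartzMap ℝ ℂ) (τ : ℝ) :
    Tendsto (fun ε : ℝ => ∫ p in {p : ℝ | ε ≤ |p|}, Complex.exp (Complex.I * τ / p) * regQ φ p)
      (𝓝[>] (0 : ℝ)) (𝓝 (regPart φ τ)) := by
  have : ∀ ε : ℝ, ∫ p in {p : ℝ | ε ≤ |p|}, Complex.exp (Complex.I * τ / p) * regQ φ p =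
      ∫ p : ℝ, Set.indicator {p : ℝ | ε ≤ |p|}
        (fun p : ℝ => Complex.exp (Complex.I * τ / p) * regQ φ p) p :=
    fun ε => (integral_indicator (measurableSet_outer ε)).symm
  simp_rw [this]
  refine tendsto_integral_filter_of_dominated_convergence
    (fun p => ‖Complex.exp (Complex.I * τ / p) * regQ φ p‖) ?_ ?_ ?_ ?_
  · exact Eventually.of_forall fun ε =>
      (osc_integrable φ τ).aestronglyMeasurable.indicator (measurableSet_outer ε)
  · exact Eventually.of_forall fun ε => Eventually.of_forall fun p => norm_indicator_le_norm_self _ _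
  · exact (osc_integrable φ τ).norm
  · have : ∀ᵐ p : ℝ, p ≠ 0 := by simp [ae_iff]
    filter_upwards [this] with p hp
    refine tendsto_const_nhds.congr' ?_
    have : ∀ᶠ ε in 𝓝[>] (0:ℝ), ε < |p| :=
      nhdsWithin_le_nhds (eventually_lt_nhds (abs_pos.2 hp))
    filter_upwards [this] with ε hε
    rw [Set.indicator_of_mem]
    exact hε.le

lemma eventually_small : ∀ᶠ ε in 𝓝[>] (0:ℝ), 0 < ε ∧ ε < 1 := by
  filter_upwards [self_mem_nhdsWithin, nhdsWithin_le_nhds (eventually_lt_nhds one_pos)] with ε h h'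
  exact ⟨h, h'⟩

lemma osc_tendsto (φ : SchwartzMap ℝ ℂ) (τ L : ℝ)
    (h : Tendsto (fun ε => sineInt (τ / ε)) (𝓝[>] (0 : ℝ)) (𝓝 L)) :
    Tendsto (fun ε : ℝ =>
      ∫ p in {p : ℝ | ε ≤ |p|}, Complex.exp (Complex.I * τ / p) * φ p / p)
      (𝓝[>] (0 : ℝ)) (𝓝 (regPart φ τ + φ 0 * (2 * Complex.I * ((L - sineInt τ : ℝ) : ℂ)))) := by
  have : Tendsto (fun ε : ℝ => (∫ p in {p : ℝ | ε ≤ |p|}, Complex.exp (Complex.I * τ / p) * regQ φ p)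
      + φ 0 * (2 * Complex.I * ((sineInt (τ / ε) - sineInt τ : ℝ) : ℂ)))
      (𝓝[>] (0 : ℝ)) (𝓝 (regPart φ τ + φ 0 * (2 * Complex.I * ((L - sineInt τ : ℝ) : ℂ)))) := by
    refine (reg_tendsto φ τ).add ?_
    refine Tendsto.const_mul _ (Tendsto.const_mul _ ?_)
    exact (Complex.continuous_ofReal.tendsto _).comp (h.sub_const _)
  refine this.congr' ?_
  filter_upwards [eventually_small] with ε hε
  exact (outer_eq φ τ ε hε.1 hε.2).symm

lemma sineInt_pos_lim (τ : ℝ) (hτ : 0 < τ) :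
    Tendsto (fun ε => sineInt (τ / ε)) (𝓝[>] (0 : ℝ)) (𝓝 (Real.pi / 2)) := by
  refine sineInt_tendsto.comp ?_
  exact (tendsto_inv_nhdsGT_zero.const_mul_atTop hτ).congr fun ε => (div_eq_mul_inv τ ε).symm

theorem stmt1 (φ : SchwartzMap ℝ ℂ) :
    ∃ (pv : ℂ) (F : ℝ → ℂ),
      Tendsto (fun ε : ℝ => ∫ p in {p : ℝ | ε ≤ |p|}, φ p / p)
        (𝓝[>] (0 : ℝ)) (𝓝 pv) ∧
      (∀ τ : ℝ, τ ≠ 0 →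
        Tendsto (fun ε : ℝ =>
            ∫ p in {p : ℝ | ε ≤ |p|}, Complex.exp (Complex.I * τ / p) * φ p / p)
          (𝓝[>] (0 : ℝ)) (𝓝 (F τ))) ∧
      Tendsto F (𝓝[>] (0 : ℝ)) (𝓝 (pv + Real.pi * Complex.I * φ 0)) ∧
      Tendsto F (𝓝[<] (0 : ℝ)) (𝓝 (pv - Real.pi * Complex.I * φ 0)) := by
  have hS : Continuous sineInt :=
    continuous_iff_continuousAt.2 fun x => (sineInt_hasDerivAt x).continuousAt
  have hG : ∀ L : ℝ, Continuous fun τ =>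
      regPart φ τ + φ 0 * (2 * Complex.I * ((L - sineInt τ : ℝ) : ℂ)) := by
    intro L
    have := regPart_continuous φ
    fun_prop
  refine ⟨regPart φ 0, fun τ => regPart φ τ + φ 0 * (2 * Complex.I *
    (((if 0 < τ then Real.pi / 2 else -(Real.pi / 2)) - sineInt τ : ℝ) : ℂ)), ?_, ?_, ?_, ?_⟩
  · have := osc_tendsto φ 0 0 (by simp [sineInt_zero])
    simpa [sineInt_zero] using this
  · intro τ hτ
    apply osc_tendsto
    rcases lt_or_gt_of_ne hτ with h | h
    · rw [if_neg (by linarith)]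
      refine (sineInt_pos_lim (-τ) (by linarith)).neg.congr fun ε => ?_
      rw [neg_div, sineInt_neg, neg_neg]
    · rw [if_pos h]
      exact sineInt_pos_lim τ h
  · have h := ((hG (Real.pi / 2)).tendsto 0).mono_left (nhdsWithin_le_nhds (s := Set.Ioi 0))
    have e : regPart φ 0 + φ 0 * (2 * Complex.I * ((Real.pi / 2 - sineInt 0 : ℝ) : ℂ)) =
        regPart φ 0 + Real.pi * Complex.I * φ 0 := by
      rw [sineInt_zero]; push_cast; ring
    rw [e] at h
    refine h.congr' ?_
    filter_upwards [self_mem_nhdsWithin] with τ hτ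
    rw [if_pos (show 0 < τ from hτ)]
  · have h := ((hG (-(Real.pi / 2))).tendsto 0).mono_left (nhdsWithin_le_nhds (s := Set.Iio 0))
    have e : regPart φ 0 + φ 0 * (2 * Complex.I * ((-(Real.pi / 2) - sineInt 0 : ℝ) : ℂ)) =
        regPart φ 0 - Real.pi * Complex.I * φ 0 := by
      rw [sineInt_zero]; push_cast; ring
    rw [e] at h
    refine h.congr' ?_
    filter_upwards [self_mem_nhdsWithin] with τ hτ
    rw [if_neg (not_lt.2 (le_of_lt hτ))]
end

section
/- For every Schwartz function V : ℝ² → ℂ, the function U(t,x,y) = ∫∫_{ℝ²} exp(−i p₁ x + i p₂ y − i t (p₁⁴ + 3p₂²)/p₁) V(p₁,p₂) dp₁ dp₂ (the integrand extended by the full phase factor interpreted as a bounded measurable function, defined for p₁ ≠ 0) satisfies: for every t ∈ ℝ, ∫_{ℝ} (∫_{ℝ} U(t,x,y) dy) dx = (2π)² V(0,0). In particular the iterated integral ∫dx ∫dy U(t,x,y) is a conserved quantity in t. -/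
open MeasureTheory Filter Topology

open scoped SchwartzMap FourierTransform ContDiff

lemma expI_iter (n : ℕ) : iteratedDeriv n (fun x : ℝ => Complex.exp (Complex.I * x))
    = fun x : ℝ => Complex.I ^ n * Complex.exp (Complex.I * x) := by
  induction n with
  | zero => simp
  | succ n ih =>
    rw [iteratedDeriv_succ, ih]
    ext x
    have h : HasDerivAt (fun x : ℝ => Complex.I * (x : ℂ)) (Complex.I * 1) x :=
      (Complex.ofRealCLM.hasDerivAt (x := x)).const_mul Complex.I
    have := (h.cexp.const_mul (Complex.I ^ n)).deriv
    rw [this]; ring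

lemma expI_temperate : (fun x : ℝ => Complex.exp (Complex.I * x)).HasTemperateGrowth := by
  refine ⟨?_, fun n => ⟨0, 1, fun x => ?_⟩⟩
  · exact (contDiff_const.mul Complex.ofRealCLM.contDiff).cexp
  · rw [norm_iteratedFDeriv_eq_norm_iteratedDeriv, expI_iter]
    simp [Complex.norm_exp]

lemma exists_mul_exp {φ : ℝ → ℝ} (hφ : φ.HasTemperateGrowth) (f : 𝓢(ℝ, ℂ)) :
    ∃ K : 𝓢(ℝ, ℂ), ∀ q, K q = Complex.exp (Complex.I * (φ q : ℝ)) * f q := by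
  refine ⟨SchwartzMap.smulLeftCLM ℂ (fun q => Complex.exp (Complex.I * (φ q : ℝ))) f, fun q => ?_⟩
  have h : (fun q => Complex.exp (Complex.I * (φ q : ℝ))).HasTemperateGrowth :=
    expI_temperate.comp hφ
  rw [SchwartzMap.smulLeftCLM_apply_apply h, smul_eq_mul]

lemma exists_slice₂ (V : 𝓢(ℝ × ℝ, ℂ)) (p : ℝ) :
    ∃ K : 𝓢(ℝ, ℂ), ∀ q, K q = V (p, q) := by
  have hg : (fun q : ℝ => ((p, q) : ℝ × ℝ)).HasTemperateGrowth := by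
    have : (fun q : ℝ => ((p, q) : ℝ × ℝ)) = (fun q => (p, 0) + ContinuousLinearMap.inr ℝ ℝ ℝ q) := by
      ext q <;> simp
    rw [this]
    exact (Function.HasTemperateGrowth.const _).add (ContinuousLinearMap.hasTemperateGrowth _)
  refine ⟨SchwartzMap.compCLM ℝ hg ⟨1, 1, fun x => ?_⟩ V, fun q => rfl⟩
  have : ‖x‖ ≤ ‖(p, x)‖ := le_max_right _ _
  simp only [pow_one, one_mul]; linarith

lemma exists_slice₁ (V : 𝓢(ℝ × ℝ, ℂ)) :
    ∃ K : 𝓢(ℝ, ℂ), ∀ p, K p = V (p, 0) := by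
  refine ⟨SchwartzMap.compCLM ℝ (ContinuousLinearMap.inl ℝ ℝ ℝ).hasTemperateGrowth
    ⟨1, 1, fun x => ?_⟩ V, fun q => rfl⟩
  have : ‖x‖ ≤ ‖(x, (0:ℝ))‖ := le_max_left _ _
  simp only [pow_one, one_mul, ContinuousLinearMap.inl_apply]; linarith

lemma integral_fourier_eq (f : 𝓢(ℝ, ℂ)) : ∫ ξ, (𝓕 f) ξ = f 0 := by
  have h : 𝓕⁻ (𝓕 f) = f := FourierTransform.fourierInv_fourier_eq f
  have h2 : (𝓕⁻ (𝓕 f)) 0 = f 0 := by rw [h]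
  rw [← h2, SchwartzMap.fourierInv_coe, Real.fourierInv_eq']
  simp

lemma fourier_L1 (f : 𝓢(ℝ, ℂ)) {a s : ℝ} (ha : 0 < a) (hs : 0 < s) :
    ∫ ξ, ‖(𝓕 f) ξ‖ ≤ a * ((∫ q, ‖f q‖ ^ 2) + s ^ 2 * ∫ q, ‖deriv f q‖ ^ 2) + Real.pi / (a * s) := by
  have hd : ∀ ξ, 𝓕 (SchwartzMap.derivCLM ℂ ℂ f) ξ = (2 * Real.pi * Complex.I * ξ) * (𝓕 f) ξ := by
    intro ξ
    rw [SchwartzMap.fourier_coe, SchwartzMap.fourier_coe]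
    have := Real.fourier_deriv (f := (f : ℝ → ℂ)) f.integrable f.differentiable
      (SchwartzMap.derivCLM ℂ ℂ f).integrable
    have h2 := congrFun this ξ
    rw [smul_eq_mul] at h2
    exact h2
  have sq_int : ∀ g : 𝓢(ℝ, ℂ), Integrable (fun q => ‖g q‖ ^ 2) := fun g =>
    (memLp_two_iff_integrable_sq_norm g.continuous.aestronglyMeasurable).1 (g.memLp 2)
  have e1 := SchwartzMap.integral_norm_sq_fourier f
  have e2 := SchwartzMap.integral_norm_sq_fourier (SchwartzMap.derivCLM ℂ ℂ f)
  simp only [SchwartzMap.derivCLM_apply] at e2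
  rw [← e1, ← e2]
  have e3 : ∫ ξ : ℝ, (1 + (s * ξ) ^ 2)⁻¹ = Real.pi / s := by
    have := Measure.integral_comp_mul_left (fun ξ : ℝ => (1 + ξ ^ 2)⁻¹) s
    rw [this, integral_univ_inv_one_add_sq, abs_of_pos (by positivity), smul_eq_mul]; ring
  have i3 : Integrable (fun ξ : ℝ => (1 + (s * ξ) ^ 2)⁻¹) :=
    integrable_inv_one_add_sq.comp_mul_left' hs.ne'
  have i1 := sq_int (𝓕 f)
  have i2 := sq_int (𝓕 (SchwartzMap.derivCLM ℂ ℂ f))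
  have i12 : Integrable (fun ξ => a * (‖(𝓕 f) ξ‖ ^ 2
      + s ^ 2 * ‖𝓕 (SchwartzMap.derivCLM ℂ ℂ f) ξ‖ ^ 2)) :=
    (i1.add (i2.const_mul _)).const_mul _
  have : a * ((∫ q, ‖(𝓕 f) q‖ ^ 2) + s ^ 2 * ∫ q, ‖𝓕 (SchwartzMap.derivCLM ℂ ℂ f) q‖ ^ 2)
      + Real.pi / (a * s) = ∫ ξ, (a * (‖(𝓕 f) ξ‖ ^ 2 + s ^ 2 * ‖𝓕 (SchwartzMap.derivCLM ℂ ℂ f) ξ‖ ^ 2)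
        + a⁻¹ * (1 + (s * ξ) ^ 2)⁻¹) := by
    rw [integral_add i12 (i3.const_mul _), integral_const_mul,
      integral_add i1 (i2.const_mul _), integral_const_mul, integral_const_mul, e3]
    field_simp
  rw [this]
  refine integral_mono (𝓕 f).integrable.norm
    (i12.add (i3.const_mul _)) fun ξ => ?_
  simp only [hd]
  set F := ‖(𝓕 f) ξ‖
  have hF : 0 ≤ F := norm_nonneg _
  have h1 : ‖2 * Real.pi * Complex.I * ξ * (𝓕 f) ξ‖ ^ 2 = (2 * Real.pi) ^ 2 * ξ ^ 2 * F ^ 2 := by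
    simp [F, mul_pow]
  rw [h1]
  have hpi : (1:ℝ) ≤ (2 * Real.pi) ^ 2 := by nlinarith [Real.pi_gt_three]
  have h2 : ξ ^ 2 * F ^ 2 ≤ (2 * Real.pi) ^ 2 * ξ ^ 2 * F ^ 2 := by
    have : 0 ≤ ξ ^ 2 * F ^ 2 := by positivity
    nlinarith
  have h3 : a * (F ^ 2 + s ^ 2 * (ξ ^ 2 * F ^ 2)) ≤
    a * (F ^ 2 + s ^ 2 * ((2 * Real.pi) ^ 2 * ξ ^ 2 * F ^ 2)) := by gcongr
  have h4 : F ≤ a * (F ^ 2 + s ^ 2 * (ξ ^ 2 * F ^ 2)) + a⁻¹ * (1 + (s * ξ) ^ 2)⁻¹ := by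
    have hc : 0 < a * (1 + (s * ξ) ^ 2) := by positivity
    rw [← mul_inv]
    have : a * (F ^ 2 + s ^ 2 * (ξ ^ 2 * F ^ 2)) = (a * (1 + (s * ξ) ^ 2)) * F ^ 2 := by ring
    rw [this]
    generalize a * (1 + (s * ξ) ^ 2) = c at hc
    have : c * F ^ 2 + c⁻¹ - F = c⁻¹ * ((c * F - 1/2) ^ 2 + 3 / 4) := by field_simp; ring
    have : 0 ≤ c⁻¹ * ((c * F - 1/2) ^ 2 + 3 / 4) := by positivity
    linarith
  exact h4.trans (by linarith)

lemma weight_integrable :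
    Integrable (fun p : ℝ => Real.sqrt (1 + 1 / |p|) / (1 + p ^ 2)) := by
  have hg : Integrable ((Set.Ioc (0:ℝ) 1).indicator (fun p : ℝ => p ^ (-(1/2) : ℝ))) := by
    rw [integrable_indicator_iff measurableSet_Ioc]
    exact (intervalIntegrable_iff_integrableOn_Ioc_of_le zero_le_one).1
      (intervalIntegral.intervalIntegrable_rpow' (by norm_num))
  set g := (Set.Ioc (0:ℝ) 1).indicator (fun p : ℝ => p ^ (-(1/2) : ℝ))
  have hg0 : ∀ p, 0 ≤ g p := fun p => Set.indicator_nonneg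
    (fun x hx => Real.rpow_nonneg hx.1.le _) p
  have hI : Integrable (fun p : ℝ => 2 * (1 + p ^ 2)⁻¹ + (g p + g (-p))) :=
    (integrable_inv_one_add_sq.const_mul 2).add (hg.add hg.comp_neg)
  refine hI.mono' (Measurable.aestronglyMeasurable (by measurability)) ?_
  have hne : ∀ᵐ p : ℝ, p ≠ 0 := by simp [ae_iff]
  filter_upwards [hne] with p hp
  have hp' : 0 < |p| := abs_pos.2 hp
  rw [Real.norm_of_nonneg (by positivity)]
  have hinv : (1 + p ^ 2)⁻¹ ≤ 1 := inv_le_one_of_one_le₀ (by nlinarith [sq_nonneg p])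
  have hinv0 : 0 ≤ (1 + p ^ 2)⁻¹ := by positivity
  rw [div_eq_mul_inv]
  by_cases h1 : |p| ≤ 1
  · have hge : |p| ^ (-(1/2) : ℝ) ≤ g p + g (-p) := by
      rcases lt_or_gt_of_ne hp with h | h
      · rw [abs_of_neg h] at h1 ⊢
        have : g (-p) = (-p) ^ (-(1/2) : ℝ) := Set.indicator_of_mem (Set.mem_Ioc.2 ⟨by linarith, h1⟩) _
        rw [this]; linarith [hg0 p]
      · rw [abs_of_pos h] at h1 ⊢
        have : g p = p ^ (-(1/2) : ℝ) := Set.indicator_of_mem (Set.mem_Ioc.2 ⟨h, h1⟩) _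
        rw [this]; linarith [hg0 (-p)]
    have hs : Real.sqrt (1 + 1 / |p|) ≤ 1 + |p| ^ (-(1/2) : ℝ) := by
      rw [Real.rpow_neg hp'.le, ← Real.sqrt_eq_rpow]
      apply Real.sqrt_le_iff.2
      refine ⟨by positivity, ?_⟩
      have : (√|p|)⁻¹ ^ 2 = 1 / |p| := by rw [inv_pow, Real.sq_sqrt hp'.le, one_div]
      have h0 : 0 ≤ (√|p|)⁻¹ := by positivity
      nlinarith
    have hr : 0 ≤ |p| ^ (-(1/2) : ℝ) := by positivity
    nlinarith
  · have hs : Real.sqrt (1 + 1 / |p|) ≤ 2 := by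
      apply Real.sqrt_le_iff.2
      refine ⟨by positivity, ?_⟩
      have : 1 / |p| ≤ 1 := by rw [div_le_one hp']; linarith
      linarith
    nlinarith [hg0 p, hg0 (-p)]


lemma decay (V : 𝓢(ℝ × ℝ, ℂ)) : ∃ C : ℝ, 0 ≤ C ∧ ∀ p q : ℝ,
    (1 + p ^ 2) * (1 + q ^ 2) ^ 2 * ‖V (p, q)‖ ≤ C ∧
    (1 + p ^ 2) * (1 + q ^ 2) ^ 2 * ‖fderiv ℝ V (p, q)‖ ≤ C := by
  have key : ∀ p q : ℝ, (1 + p ^ 2) * (1 + q ^ 2) ^ 2 ≤ (1 + ‖((p, q) : ℝ × ℝ)‖) ^ 6 := by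
    intro p q
    have h1 : |p| ≤ ‖((p, q) : ℝ × ℝ)‖ := le_max_left _ _
    have h2 : |q| ≤ ‖((p, q) : ℝ × ℝ)‖ := le_max_right _ _
    set r := ‖((p, q) : ℝ × ℝ)‖
    have hr : 0 ≤ r := norm_nonneg _
    have h3 : 1 + p ^ 2 ≤ (1 + r) ^ 2 := by
      rw [← sq_abs p]; nlinarith [abs_nonneg p]
    have h4 : 1 + q ^ 2 ≤ (1 + r) ^ 2 := by
      rw [← sq_abs q]; nlinarith [abs_nonneg q]
    calc (1 + p ^ 2) * (1 + q ^ 2) ^ 2 ≤ (1 + r) ^ 2 * ((1 + r) ^ 2) ^ 2 := by gcongr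
      _ = _ := by ring
  have B := fun (n : ℕ) (hn : n ≤ 1) (z : ℝ × ℝ) =>
    SchwartzMap.one_add_le_sup_seminorm_apply (𝕜 := ℝ) (m := (6, 1)) (k := 6) (n := n) le_rfl hn V z
  set C : ℝ := 2 ^ (6, 1).1 * (Finset.Iic (6, 1)).sup (fun m => SchwartzMap.seminorm ℝ m.1 m.2) V
  refine ⟨C, by positivity, fun p q => ⟨?_, ?_⟩⟩
  · have := B 0 zero_le_one (p, q)
    rw [norm_iteratedFDeriv_zero] at this
    exact (mul_le_mul_of_nonneg_right (key p q) (norm_nonneg _)).trans this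
  · have := B 1 le_rfl (p, q)
    rw [norm_iteratedFDeriv_one] at this
    exact (mul_le_mul_of_nonneg_right (key p q) (norm_nonneg _)).trans this

lemma sq_bound {g : ℝ → ℂ} {c : ℝ} (hg : ∀ q, ‖g q‖ ≤ c / (1 + q ^ 2)) :
    ∫ q, ‖g q‖ ^ 2 ≤ c ^ 2 * Real.pi := by
  rw [← integral_univ_inv_one_add_sq, ← integral_const_mul]
  refine integral_mono_of_nonneg (Eventually.of_forall fun q => by positivity)
    (integrable_inv_one_add_sq.const_mul _) (Eventually.of_forall fun q => ?_)
  have h1 : ‖g q‖ ^ 2 ≤ (c / (1 + q ^ 2)) ^ 2 := by gcongr; exact hg q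
  have h2 : (1 + q ^ 2)⁻¹ ≤ 1 := inv_le_one_of_one_le₀ (by nlinarith [sq_nonneg q])
  have h3 : 0 ≤ (1 + q ^ 2)⁻¹ := by positivity
  refine h1.trans ?_
  rw [div_eq_mul_inv, mul_pow]
  exact mul_le_mul_of_nonneg_left (by nlinarith) (sq_nonneg c)

lemma kernel_bound (V : 𝓢(ℝ × ℝ, ℂ)) (t : ℝ) : ∃ C : ℝ, ∀ p : ℝ, p ≠ 0 → ∀ K : 𝓢(ℝ, ℂ),
    (∀ q, K q = Complex.exp (Complex.I * ((-(3 * t / p) * q ^ 2 : ℝ))) * V (p, q)) →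
    ∫ ξ, ‖(𝓕 K) ξ‖ ≤ C * (Real.sqrt (1 + 1 / |p|) / (1 + p ^ 2)) := by
  obtain ⟨C, hC, hV⟩ := decay V
  set D := C * (1 + 6 * |t|) with hD
  have hD0 : 0 ≤ D := by positivity
  have hCD : C ≤ D := by rw [hD]; nlinarith [abs_nonneg t]
  refine ⟨2 * D ^ 2 * Real.pi + Real.pi, fun p hp K hK => ?_⟩
  have hp' : 0 < |p| := abs_pos.2 hp
  set r := 1 + 1 / |p| with hr
  have hr1 : 1 ≤ r := by rw [hr]; have : 0 < 1 / |p| := by positivity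
                         linarith
  have hr0 : 0 < r := by linarith
  have hw : 0 < 1 + p ^ 2 := by positivity
  have hnorm : ∀ x : ℝ, ‖Complex.exp (Complex.I * (x : ℝ))‖ = 1 := fun x => by
    simp [Complex.norm_exp]
  have b1 : ∀ q, ‖K q‖ ≤ (D / (1 + p ^ 2)) / (1 + q ^ 2) := by
    intro q
    rw [hK, norm_mul, hnorm, one_mul, div_div, le_div_iff₀ (by positivity)]
    have := (hV p q).1
    have h1 : (1 + q ^ 2) ≤ (1 + q ^ 2) ^ 2 := by nlinarith [sq_nonneg q, sq_nonneg (q ^ 2)]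
    calc ‖V (p, q)‖ * ((1 + p ^ 2) * (1 + q ^ 2)) ≤ ‖V (p, q)‖ * ((1 + p ^ 2) * (1 + q ^ 2) ^ 2) := by
          gcongr
      _ ≤ D := by linarith
  have hder : ∀ q, deriv K q = Complex.exp (Complex.I * ((-(3 * t / p) * q ^ 2 : ℝ))) *
      (Complex.I * ((-(6 * t / p) * q : ℝ)) * V (p, q) + fderiv ℝ V (p, q) (0, 1)) := by
    intro q
    have hfun : (K : ℝ → ℂ) = fun q => Complex.exp (Complex.I * ((-(3 * t / p) * q ^ 2 : ℝ)))
      * V (p, q) := funext hK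
    rw [hfun]
    have h1 : HasDerivAt (fun q : ℝ => -(3 * t / p) * q ^ 2) (-(6 * t / p) * q) q := by
      have := (hasDerivAt_pow 2 q).const_mul (-(3 * t / p))
      exact this.congr_deriv (by push_cast; ring)
    have h2 := (h1.ofReal_comp.const_mul Complex.I).cexp
    have h3 : HasDerivAt (fun q : ℝ => V (p, q)) (fderiv ℝ V (p, q) (0, 1)) q :=
      (V.hasFDerivAt (p, q)).comp_hasDerivAt q ((hasDerivAt_const q p).prodMk (hasDerivAt_id q))
    refine (h2.mul h3).deriv.trans ?_
    ring
  have b2 : ∀ q, ‖deriv K q‖ ≤ (r * D / (1 + p ^ 2)) / (1 + q ^ 2) := by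
    intro q
    rw [hder, norm_mul, hnorm, one_mul, div_div, le_div_iff₀ (by positivity)]
    have h1 : (1 + q ^ 2) ≤ (1 + q ^ 2) ^ 2 := by nlinarith [sq_nonneg q, sq_nonneg (q ^ 2)]
    have hq : |q| ≤ 1 + q ^ 2 := by
      rw [← sq_abs q]; nlinarith [sq_nonneg (|q| - 1), abs_nonneg q]
    have n1 : ‖Complex.I * ((-(6 * t / p) * q : ℝ)) * V (p, q)‖
        = 6 * |t| * (1 / |p|) * |q| * ‖V (p, q)‖ := by
      rw [norm_mul, norm_mul, Complex.norm_I, Complex.norm_real, Real.norm_eq_abs, abs_mul, abs_neg,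
        abs_div, abs_mul]
      norm_num
      left; left; ring
    have n2 : ‖fderiv ℝ V (p, q) (0, 1)‖ ≤ ‖fderiv ℝ V (p, q)‖ := by
      have := (fderiv ℝ V (p, q)).le_opNorm (0, 1)
      simpa [Prod.norm_def] using this
    have m1 : |q| * ‖V (p, q)‖ * ((1 + p ^ 2) * (1 + q ^ 2)) ≤ C := by
      calc _ ≤ (1 + q ^ 2) * ‖V (p, q)‖ * ((1 + p ^ 2) * (1 + q ^ 2)) := by gcongr
        _ = (1 + p ^ 2) * (1 + q ^ 2) ^ 2 * ‖V (p, q)‖ := by ring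
        _ ≤ C := (hV p q).1
    have m2 : ‖fderiv ℝ V (p, q)‖ * ((1 + p ^ 2) * (1 + q ^ 2)) ≤ C := by
      calc _ ≤ ‖fderiv ℝ V (p, q)‖ * ((1 + p ^ 2) * (1 + q ^ 2) ^ 2) := by gcongr
        _ = (1 + p ^ 2) * (1 + q ^ 2) ^ 2 * ‖fderiv ℝ V (p, q)‖ := by ring
        _ ≤ C := (hV p q).2
    calc _ ≤ (6 * |t| * (1 / |p|) * |q| * ‖V (p, q)‖ + ‖fderiv ℝ V (p, q)‖)
          * ((1 + p ^ 2) * (1 + q ^ 2)) := by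
          gcongr
          exact (norm_add_le _ _).trans (by rw [n1]; gcongr)
      _ = 6 * |t| * (1 / |p|) * (|q| * ‖V (p, q)‖ * ((1 + p ^ 2) * (1 + q ^ 2)))
          + ‖fderiv ℝ V (p, q)‖ * ((1 + p ^ 2) * (1 + q ^ 2)) := by ring
      _ ≤ 6 * |t| * (1 / |p|) * C + C := by gcongr
      _ ≤ r * D := by
        have : 0 ≤ 6 * |t| * C := by positivity
        have : 0 ≤ 1 / |p| * C := by positivity
        rw [hr, hD]; nlinarith
  have B := fourier_L1 K (a := Real.sqrt r * (1 + p ^ 2)) (s := 1 / r) (by positivity) (by positivity)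
  refine B.trans ?_
  have s1 := sq_bound b1
  have s2 := sq_bound b2
  calc _ ≤ Real.sqrt r * (1 + p ^ 2) * ((D / (1 + p ^ 2)) ^ 2 * Real.pi
        + (1 / r) ^ 2 * ((r * D / (1 + p ^ 2)) ^ 2 * Real.pi))
        + Real.pi / (Real.sqrt r * (1 + p ^ 2) * (1 / r)) := by gcongr
    _ = _ := by
      have hs : 0 < Real.sqrt r := Real.sqrt_pos.2 hr0
      have hss : Real.sqrt r ^ 2 = r := Real.sq_sqrt hr0.le
      generalize Real.sqrt r = z at hs hss
      clear_value r
      subst hss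
      field_simp
      ring

theorem stmt11 (V : SchwartzMap (ℝ × ℝ) ℂ)
    (U : ℝ → ℝ → ℝ → ℂ)
    (hU : ∀ t x y : ℝ, U t x y =
      ∫ p : ℝ × ℝ, Complex.exp (-Complex.I * p.1 * x + Complex.I * p.2 * y
        - Complex.I * t * (p.1 ^ 4 + 3 * p.2 ^ 2) / p.1) * V p) :
    ∀ t : ℝ,
      (∀ x : ℝ, Integrable (fun y : ℝ => U t x y)) ∧
      Integrable (fun x : ℝ => ∫ y : ℝ, U t x y) ∧
      (∫ x : ℝ, ∫ y : ℝ, U t x y) = (2 * Real.pi) ^ 2 * V 0 := by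
  intro t
  have hpi : (2 * Real.pi : ℝ) ≠ 0 := by positivity
  have hnorm : ∀ x : ℝ, ‖Complex.exp (Complex.I * (x : ℝ))‖ = 1 := fun x => by
    simp [Complex.norm_exp]
  have hin : ∀ a b : ℝ, inner ℝ a b = a * b := fun a b => by simp [mul_comm]
  have hne : ∀ᵐ p : ℝ, p ≠ 0 := by simp [ae_iff]
  -- the kernels in the second variable
  have hK : ∀ p : ℝ, ∃ K : 𝓢(ℝ, ℂ), ∀ q, K q =
      Complex.exp (Complex.I * ((-(3 * t / p) * q ^ 2 : ℝ))) * V (p, q) := by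
    intro p
    obtain ⟨f, hf⟩ := exists_slice₂ V p
    obtain ⟨K, hK⟩ := exists_mul_exp (φ := fun q => -(3 * t / p) * q ^ 2)
      ((Function.HasTemperateGrowth.const _).mul (Function.HasTemperateGrowth.id'.pow 2)) f
    exact ⟨K, fun q => by rw [hK, hf]⟩
  choose K hK using hK
  obtain ⟨C, hC⟩ := kernel_bound V t
  -- the limiting kernel
  obtain ⟨H, hH⟩ : ∃ H : 𝓢(ℝ, ℂ), ∀ p, H p =
      Complex.exp (Complex.I * ((-t * p ^ 3 : ℝ))) * V (p, 0) := by
    obtain ⟨f, hf⟩ := exists_slice₁ V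
    obtain ⟨K, hK⟩ := exists_mul_exp (φ := fun p => -t * p ^ 3)
      ((Function.HasTemperateGrowth.const _).mul (Function.HasTemperateGrowth.id'.pow 3)) f
    exact ⟨K, fun q => by rw [hK, hf]⟩
  have main : ∀ x : ℝ, Integrable (fun y : ℝ => U t x y) ∧
      ∫ y : ℝ, U t x y = (2 * Real.pi : ℝ) * (𝓕 H) (x / (2 * Real.pi)) := by
    intro x
    set G : ℝ → ℝ → ℝ → ℂ := fun y p q => Complex.exp (-Complex.I * p * x + Complex.I * q * y
        - Complex.I * t * (p ^ 4 + 3 * q ^ 2) / p) * V (p, q) with hG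
    set W : ℝ → ℝ → ℂ := fun p y => ∫ q, G y p q with hW
    have hGm : Measurable (fun z : (ℝ × ℝ) × ℝ => G z.1.2 z.1.1 z.2) := by
      have hVm : Measurable V := V.continuous.measurable
      simp only [hG]
      fun_prop
    have hWm : StronglyMeasurable (Function.uncurry W) :=
      hGm.stronglyMeasurable.integral_prod_right
    have hUW : ∀ y, U t x y = ∫ p, W p y := by
      intro y
      rw [hU]
      have hint : Integrable (fun z : ℝ × ℝ => G y z.1 z.2) (volume.prod volume) := by
        refine (V.integrable (μ := volume)).mono ?_ (Eventually.of_forall fun z => ?_)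
        · exact (hGm.comp (f := fun z : ℝ × ℝ => ((z.1, y), z.2)) (by fun_prop)).aestronglyMeasurable
        · have : -Complex.I * z.1 * x + Complex.I * z.2 * y
              - Complex.I * t * (z.1 ^ 4 + 3 * z.2 ^ 2) / z.1
              = Complex.I * ((-z.1 * x + z.2 * y - t * (z.1 ^ 4 + 3 * z.2 ^ 2) / z.1 : ℝ)) := by
            push_cast; ring
          simp only [hG]
          rw [norm_mul, this, hnorm, one_mul]
      exact integral_prod _ hint
    have hWK : ∀ p : ℝ, p ≠ 0 → ∀ y, W p y =
        Complex.exp (Complex.I * ((-p * x - t * p ^ 3 : ℝ))) * (𝓕 (K p)) ((-(2 * Real.pi))⁻¹ * y) := by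
      intro p hp y
      have hpc : (p : ℂ) ≠ 0 := by exact_mod_cast hp
      rw [SchwartzMap.fourier_coe, Real.fourier_eq', ← integral_const_mul]
      refine integral_congr_ae (Eventually.of_forall fun q => ?_)
      simp only [hG, hK, smul_eq_mul]
      rw [← mul_assoc, ← mul_assoc, ← Complex.exp_add, ← Complex.exp_add]
      congr 2
      have h1 : -2 * Real.pi * inner ℝ q ((-(2 * Real.pi))⁻¹ * y) = q * y := by
        rw [hin]
        field_simp
      rw [h1]
      push_cast
      field_simp
      ring
    have hWn : ∀ p : ℝ, p ≠ 0 → ∀ y, ‖W p y‖ = ‖(𝓕 (K p)) ((-(2 * Real.pi))⁻¹ * y)‖ := by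
      intro p hp y
      rw [hWK p hp, norm_mul, hnorm, one_mul]
    have hc : (-(2 * Real.pi))⁻¹ ≠ 0 := inv_ne_zero (neg_ne_zero.2 hpi)
    have habs : |((-(2 * Real.pi))⁻¹)⁻¹| = 2 * Real.pi := by
      rw [inv_inv, abs_neg, abs_of_pos (by positivity)]
    have hWint : Integrable (Function.uncurry W) (volume.prod volume) := by
      rw [integrable_prod_iff hWm.aestronglyMeasurable]
      constructor
      · filter_upwards [hne] with p hp
        simp only [Function.uncurry_apply_pair]
        simp_rw [hWK p hp]
        exact ((𝓕 (K p)).integrable.comp_mul_left' hc).const_mul _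
      · refine (weight_integrable.const_mul ((2 * Real.pi) * C)).mono'
          hWm.norm.aestronglyMeasurable.integral_prod_right' ?_
        filter_upwards [hne] with p hp
        rw [Real.norm_of_nonneg (integral_nonneg fun _ => norm_nonneg _)]
        simp only [Function.uncurry_apply_pair]
        simp_rw [hWn p hp]
        have e := Measure.integral_comp_mul_left (fun ξ => ‖(𝓕 (K p)) ξ‖) (-(2 * Real.pi))⁻¹
        rw [e, habs, smul_eq_mul, mul_assoc (2 * Real.pi) C]
        exact mul_le_mul_of_nonneg_left (hC p hp (K p) (hK p)) (by positivity)
    have hWy : ∀ p : ℝ, p ≠ 0 → ∫ y, W p y = (2 * Real.pi : ℝ) *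
        (Complex.exp (Complex.I * ((-p * x : ℝ))) * H p) := by
      intro p hp
      simp_rw [hWK p hp]
      have e := Measure.integral_comp_mul_left (fun ξ => (𝓕 (K p)) ξ) (-(2 * Real.pi))⁻¹
      rw [integral_const_mul, e, habs,
        integral_fourier_eq, hK, hH, Complex.real_smul]
      have : Complex.exp (Complex.I * ((-p * x - t * p ^ 3 : ℝ))) =
        Complex.exp (Complex.I * ((-p * x : ℝ))) * Complex.exp (Complex.I * ((-t * p ^ 3 : ℝ))) := by
        rw [← Complex.exp_add]; congr 1; push_cast; ring
      rw [this]
      simp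
      ring
    refine ⟨?_, ?_⟩
    · simp_rw [hUW]
      exact hWint.integral_prod_right
    · simp_rw [hUW]
      rw [← integral_integral_swap hWint, SchwartzMap.fourier_coe, Real.fourier_eq',
        ← integral_const_mul]
      refine integral_congr_ae ?_
      filter_upwards [hne] with p hp
      rw [hWy p hp, smul_eq_mul]
      congr 3
      have h1 : -2 * Real.pi * inner ℝ p (x / (2 * Real.pi)) = -p * x := by
        rw [hin]
        field_simp
      rw [h1, mul_comm]
  refine ⟨fun x => (main x).1, ?_, ?_⟩
  · simp_rw [fun x => (main x).2]
    exact ((𝓕 H).integrable.comp_div hpi).const_mul _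
  · simp_rw [fun x => (main x).2]
    have e := Measure.integral_comp_div (fun ξ => (𝓕 H) ξ) (2 * Real.pi)
    rw [integral_const_mul, e, integral_fourier_eq, hH,
      abs_of_pos (by positivity), Complex.real_smul]
    have : V ((0 : ℝ), (0 : ℝ)) = V 0 := rfl
    rw [this]
    simp
    ring
end
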